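/- It is undecidable whether, for a given integer weighted automaton 𝒜 over a finite alphabet A, there exists an infinite word w ∈ A^ω such that for every path π for w and every finite prefix p of π, the weight γ(p) is nonzero: the predicate on encoded automata asserting the existence of such a word is not a computable predicate. -/

import Mathlib

/-- A code for an integer weighted automaton: the number of states `n` (states are
`0, …, n-1`), the number of letters `m` (letters are `0, …, m-1`), the list of transitions
`(source state, letter, target state, weight)`, the initial state, and the list of final
states. -/
abbrev WACode : Type := ℕ × ℕ × List (ℕ × ℕ × ℕ × ℤ) × ℕ × List ℕ

/-- The code describes a genuine complete integer weighted automaton: all data are in range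
and for every state `q` and letter `x` there is at least one transition `(q, x, p, z)`. -/
def WAWellFormed : WACode → Prop
  | (n, m, ts, q0, fs) =>
    q0 < n ∧ (∀ q ∈ fs, q < n) ∧
    (∀ t ∈ ts, t.1 < n ∧ t.2.1 < m ∧ t.2.2.1 < n) ∧
    (∀ q < n, ∀ x < m, ∃ p z, (q, x, p, z) ∈ ts)

/-- `π` is a path for the infinite word `w` over the transition list `ts` starting in `q0`. -/
def WAIsPath (ts : List (ℕ × ℕ × ℕ × ℤ)) (q0 : ℕ) (w : ℕ → ℕ)
    (π : ℕ → ℕ × ℕ × ℕ × ℤ) : Prop :=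
  (∀ j, π j ∈ ts) ∧ (π 0).1 = q0 ∧ (∀ j, (π j).2.2.1 = (π (j + 1)).1) ∧ (∀ j, (π j).2.1 = w j)

/-- There exists an infinite word `w` over the alphabet of the encoded automaton such that
for every path `π` for `w` and every finite prefix of `π` the weight is nonzero. -/
def WAHasAlwaysNonzeroWord (c : WACode) : Prop :=
  ∃ w : ℕ → ℕ, (∀ i, w i < c.2.1) ∧
    ∀ π, WAIsPath c.2.2.1 c.2.2.2.1 w π →
      ∀ k, (∑ j ∈ Finset.range (k + 1), (π j).2.2.2) ≠ 0

/-! A Turing machine is simulated by a finite-state control with a queue: the configuration is a row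
of cells standing on the queue, and one sweep over the row performs one step. The word to be
tested is the sequence of letters removed from the queue, and an automaton whose weight is about
twice the length of the queue refutes every other word. In each move it may announce that a letter
just appended to the queue occurs in the word at the position where it will be removed; the weight
then becomes odd and decreases by `2` per letter, so it can reach zero only at that very position,
with a last step of weight `-1` that exists only if the letter there is a different one. After a
letter on which the machine halts, the even weight may decrease by `2` per letter down to zero. So a
word all of whose runs have nonzero weight exists if and only if the machine does not halt. -/

namespace WeightedAutomaton

section Runs

variable {S A : Type*} {T : Set (S × A × S × ℤ)} {q₀ q : S} {w : ℕ → A} {k : ℕ} {W : ℤ}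

/-- `Run T q₀ w k q W`: some sequence of transitions in `T` leads from `q₀` to `q` along the first
`k` letters of `w`, with total weight `W`. -/
inductive Run (T : Set (S × A × S × ℤ)) (q₀ : S) (w : ℕ → A) : ℕ → S → ℤ → Prop
  | nil : Run T q₀ w 0 q₀ 0
  | snoc {k q W p z} : Run T q₀ w k q W → (q, w k, p, z) ∈ T → Run T q₀ w (k + 1) p (W + z)

/-- No nonempty run on the word `w` has weight zero. -/
def ZeroFree (T : Set (S × A × S × ℤ)) (q₀ : S) (w : ℕ → A) : Prop :=
  ∀ k q, ¬ Run T q₀ w (k + 1) q 0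

theorem Run.iterate_loop (h : Run T q₀ w k q W) {z : ℤ} (hloop : ∀ x, (q, x, q, z) ∈ T) (n : ℕ) :
    Run T q₀ w (k + n) q (W + n * z) := by
  induction n with
  | zero => simpa using h
  | succ n ih => simpa only [Nat.cast_succ, add_one_mul, add_assoc] using ih.snoc (hloop _)

variable {S' A' : Type*} {f : S → S'} {g : A → A'}

/-- The renaming of states along `f` and of letters along `g`, acting on transitions. -/
def mapTransition (f : S → S') (g : A → A') : S × A × S × ℤ → S' × A' × S' × ℤ :=
  Prod.map f (Prod.map g (Prod.map f id))

theorem Run.map (f : S → S') (g : A → A') (h : Run T q₀ w k q W) :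
    Run (mapTransition f g '' T) (f q₀) (g ∘ w) k (f q) W := by
  induction h with
  | nil => exact .nil
  | snoc _ ht ih => exact ih.snoc ⟨_, ht, rfl⟩

theorem Run.of_map (hf : f.Injective) (hg : g.Injective) {q' : S'}
    (h : Run (mapTransition f g '' T) (f q₀) (g ∘ w) k q' W) :
    ∃ q, f q = q' ∧ Run T q₀ w k q W := by
  induction h with
  | nil => exact ⟨q₀, rfl, .nil⟩
  | snoc _ ht ih =>
    obtain ⟨q, rfl, hq⟩ := ih
    obtain ⟨⟨r, x, p, z⟩, ht, heq⟩ := ht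
    simp only [mapTransition, Prod.map_apply, id_eq, Prod.mk.injEq,
      Function.comp_apply, hf.eq_iff, hg.eq_iff] at heq
    obtain ⟨rfl, rfl, rfl, rfl⟩ := heq
    exact ⟨p, rfl, hq.snoc ht⟩

theorem zeroFree_map_iff (hf : f.Injective) (hg : g.Injective) :
    ZeroFree (mapTransition f g '' T) (f q₀) (g ∘ w) ↔ ZeroFree T q₀ w := by
  refine ⟨fun h k q hrun => h k _ (hrun.map f g), fun h k q hrun => ?_⟩
  obtain ⟨q, -, hq⟩ := hrun.of_map hf hg
  exact h k q hq

end Runs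

section Paths

variable {ts : List (ℕ × ℕ × ℕ × ℤ)} {q₀ : ℕ} {w : ℕ → ℕ}

theorem run_of_isPath {π : ℕ → ℕ × ℕ × ℕ × ℤ} (h : WAIsPath ts q₀ w π) (k : ℕ) :
    Run {t | t ∈ ts} q₀ w k (π k).1 (∑ j ∈ Finset.range k, (π j).2.2.2) := by
  obtain ⟨hmem, rfl, hchain, hletter⟩ := h
  induction k with
  | zero => exact .nil
  | succ k ih =>
    rw [Finset.sum_range_succ, ← hchain k]
    exact ih.snoc (hletter k ▸ hmem k)

theorem exists_isPath_of_run {k q : ℕ} {W : ℤ} (h : Run {t | t ∈ ts} q₀ w k q W)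
    {ρ : ℕ → ℕ × ℕ × ℕ × ℤ} (hρ : WAIsPath ts q (fun j => w (k + j)) ρ) :
    ∃ π, WAIsPath ts q₀ w π ∧ (∀ j, π (k + j) = ρ j) ∧
      ∑ j ∈ Finset.range k, (π j).2.2.2 = W := by
  induction h generalizing ρ with
  | nil => exact ⟨ρ, by simpa using hρ, by simp, by simp⟩
  | @snoc k q W p z _ ht ih =>
    obtain ⟨hmem, hstart, hchain, hletter⟩ := hρ
    let ρ' : ℕ → ℕ × ℕ × ℕ × ℤ := fun j => j.casesOn (q, w k, p, z) ρ
    have hρ' : WAIsPath ts q (fun j => w (k + j)) ρ' := by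
      refine ⟨?_, rfl, ?_, ?_⟩ <;> rintro (_ | j)
      exacts [ht, hmem j, hstart.symm, hchain j, rfl,
        (hletter j).trans (congrArg w (by omega))]
    obtain ⟨π, hπ, htail, hsum⟩ := ih hρ'
    refine ⟨π, hπ, fun j => ?_, ?_⟩
    · rw [show k + 1 + j = k + (j + 1) by omega, htail]
    · rw [Finset.sum_range_succ, hsum, show π k = (q, w k, p, z) from htail 0]

variable {n m : ℕ} {fs : List ℕ}

theorem exists_isPath (h : WAWellFormed (n, m, ts, q₀, fs)) {q : ℕ} (hq : q < n)
    (hw : ∀ i, w i < m) : ∃ ρ, WAIsPath ts q w ρ := by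
  obtain ⟨-, -, hrange, hcomplete⟩ := h
  choose! next weight hnext using hcomplete
  let state : ℕ → ℕ := fun j => j.rec q fun j p => next p (w j)
  have hstate : ∀ j, state j < n := by
    intro j
    induction j with
    | zero => exact hq
    | succ j ih => exact (hrange _ (hnext _ ih _ (hw j))).2.2
  exact ⟨fun j => (state j, w j, state (j + 1), weight (state j) (w j)),
    fun j => hnext _ (hstate j) _ (hw j), rfl, fun _ => rfl, fun _ => rfl⟩

theorem hasAlwaysNonzeroWord_iff_zeroFree (h : WAWellFormed (n, m, ts, q₀, fs)) :
    WAHasAlwaysNonzeroWord (n, m, ts, q₀, fs) ↔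
      ∃ w : ℕ → ℕ, (∀ i, w i < m) ∧ ZeroFree {t | t ∈ ts} q₀ w := by
  refine exists_congr fun w => and_congr_right fun hw => ⟨fun hpaths k q hrun => ?_,
    fun hfree π hπ k hsum => hfree k _ (hsum ▸ run_of_isPath hπ (k + 1))⟩
  have hrange : ∀ {k q W}, Run {t | t ∈ ts} q₀ w (k + 1) q W → q < n := by
    rintro k q _ (_ | ⟨-, ht⟩)
    exact (h.2.2.1 _ ht).2.2
  obtain ⟨ρ, hρ⟩ := exists_isPath h (hrange hrun) (w := fun j => w (k + 1 + j)) fun j => hw _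
  obtain ⟨π, hπ, -, hsum⟩ := exists_isPath_of_run hrun hρ
  exact hpaths π hπ k hsum

end Paths

section Codes

variable {S A : Type*} [Finite S] [Finite A]

/-- The position of an element in a fixed enumeration of a finite type; it turns states and letters
into the numbers that occur in a `WACode`. -/
noncomputable def index {α : Type*} [Finite α] (a : α) : ℕ :=
  Finite.equivFin α a

theorem index_lt {α : Type*} [Finite α] (a : α) : index a < Nat.card α :=
  (Finite.equivFin α a).isLt

theorem index_injective {α : Type*} [Finite α] : Function.Injective (index : α → ℕ) :=
  Fin.val_injective.comp (Finite.equivFin α).injective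

theorem exists_index_eq {α : Type*} [Finite α] {i : ℕ} (hi : i < Nat.card α) :
    ∃ a : α, index a = i :=
  ⟨(Finite.equivFin α).symm ⟨i, hi⟩, by simp [index]⟩

/-- The code of the automaton with transitions `ts` and initial state `q₀`. The existence of an
always nonzero word does not involve final states, so none are recorded. -/
noncomputable def code (ts : List (S × A × S × ℤ)) (q₀ : S) : WACode :=
  (Nat.card S, Nat.card A, ts.map (mapTransition index index), index q₀, [])

variable {ts : List (S × A × S × ℤ)}

theorem wellFormed_code (hts : ∀ q x, ∃ p z, (q, x, p, z) ∈ ts) (q₀ : S) :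
    WAWellFormed (code ts q₀) := by
  refine ⟨index_lt q₀, by simp, ?_, fun q hq x hx => ?_⟩
  · simp only [List.mem_map]
    rintro _ ⟨⟨q, x, p, z⟩, -, rfl⟩
    exact ⟨index_lt q, index_lt x, index_lt p⟩
  · obtain ⟨q, rfl⟩ := exists_index_eq hq
    obtain ⟨x, rfl⟩ := exists_index_eq hx
    obtain ⟨p, z, ht⟩ := hts q x
    exact ⟨index p, z, List.mem_map_of_mem (f := mapTransition index index) ht⟩

theorem hasAlwaysNonzeroWord_code_iff (hts : ∀ q x, ∃ p z, (q, x, p, z) ∈ ts) (q₀ : S) :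
    WAHasAlwaysNonzeroWord (code ts q₀) ↔ ∃ w, ZeroFree {t | t ∈ ts} q₀ w := by
  have himage : {t | t ∈ ts.map (mapTransition index index)} =
      mapTransition index index '' {t | t ∈ ts} := by
    ext; simp
  refine (hasAlwaysNonzeroWord_iff_zeroFree (wellFormed_code hts q₀)).trans ?_
  rw [himage]
  constructor
  · rintro ⟨w, hw, hfree⟩
    choose w' hw' using fun i => exists_index_eq (hw i)
    obtain rfl : index ∘ w' = w := funext hw'
    exact ⟨w', (zeroFree_map_iff index_injective index_injective).1 hfree⟩
  · rintro ⟨w, hfree⟩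
    exact ⟨index ∘ w, fun i => index_lt _,
      (zeroFree_map_iff index_injective index_injective).2 hfree⟩

theorem primrec_code [Primcodable S] [Primcodable A] (q₀ : S) :
    Primrec fun ts : List (S × A × S × ℤ) => code ts q₀ := by
  have hmap : Primrec (mapTransition index index : S × A × S × ℤ → ℕ × ℕ × ℕ × ℤ) := by
    have hS : Primrec (index : S → ℕ) := Primrec.dom_finite _
    have hA : Primrec (index : A → ℕ) := Primrec.dom_finite _
    exact .pair (hS.comp .fst) (.pair (hA.comp (.comp .fst .snd)) (.pair
      (hS.comp (.comp .fst (.comp .snd .snd)))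
      (Primrec.snd.comp (.comp .snd .snd))))
  exact .pair (.const _) (.pair (.const _) (.pair
    (.list_map .id (hmap.comp .snd)) (.const _)))

end Codes

end WeightedAutomaton
/-- A queue system: a machine with control states `Q` and a queue of letters from `A`. In one move
it removes the first letter of the queue and, depending on that letter and on its control state,
changes its state by `next` and appends the word `out` to the end of the queue. -/
structure QueueSystem (A Q : Type*) where
  start : Q
  next : Q → A → Q
  out : Q → A → List A

namespace QueueSystem

variable {A Q : Type*} (S : QueueSystem A Q) {s : ℕ → A} {i j : ℕ}

/-- One move of a queue system; an empty queue stays as it is. -/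
def step : Q × List A → Q × List A
  | (q, []) => (q, [])
  | (q, a :: v) => (S.next q a, v ++ S.out q a)

/-- The letter removed from the queue in the `i`-th move from `c`, or `none` if the queue is
empty. -/
def popped (c : Q × List A) (i : ℕ) : Option A :=
  (S.step^[i] c).2.head?

/-- The control state after `i` moves that remove the letters `s 0, s 1, …`. -/
def controlAt (s : ℕ → A) : ℕ → Q
  | 0 => S.start
  | i + 1 => S.next (controlAt s i) (s i)

/-- All that has stood on the queue during `i` moves that remove the letters `s 0, s 1, …` from
a queue initially consisting of `s 0`. -/
def written (s : ℕ → A) : ℕ → List A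
  | 0 => [s 0]
  | i + 1 => written s i ++ S.out (S.controlAt s i) (s i)

/-- `s` is the sequence of letters removed from the queue: the word appended in each move
reappears in `s` at the positions where it is removed again. -/
def IsConsistent (s : ℕ → A) : Prop :=
  ∀ i t a, (S.out (S.controlAt s i) (s i))[t]? = some a → s ((S.written s i).length + t) = a

/-- The queue never runs empty, and from the second move on never has fewer than two letters. -/
structure IsProductive : Prop where
  out_ne_nil : ∀ q a, S.out q a ≠ []
  two_le_length_out_start : ∀ a, 2 ≤ (S.out S.start a).length

variable {S}

theorem popped_succ (c : Q × List A) (i : ℕ) : S.popped c (i + 1) = S.popped (S.step c) i := rfl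

theorem popped_add (c : Q × List A) (i j : ℕ) :
    S.popped c (i + j) = S.popped (S.step^[j] c) i := by
  rw [popped, popped, Function.iterate_add_apply]

theorem popped_eq_getElem? {c : Q × List A} (hi : i < c.2.length) : S.popped c i = c.2[i]? := by
  induction i generalizing c with
  | zero => exact List.head?_eq_getElem? ..
  | succ i ih =>
    obtain ⟨q, _ | ⟨a, v⟩⟩ := c
    · simp at hi
    · have hv : i < v.length := Nat.lt_of_succ_lt_succ hi
      rw [popped_succ, ih (by rw [step, List.length_append]; omega), step,
        List.getElem?_append_left hv, List.getElem?_cons_succ]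

theorem popped_isSome (hS : S.IsProductive) {c : Q × List A} (hc : c.2 ≠ []) (i : ℕ) :
    (S.popped c i).isSome := by
  induction i generalizing c with
  | zero => simpa [popped] using hc
  | succ i ih =>
    obtain ⟨q, _ | ⟨a, v⟩⟩ := c
    · exact absurd rfl hc
    · exact ih (by simp [step, hS.out_ne_nil])

theorem getElem?_written_of_le (hij : i ≤ j) {t : ℕ} {a : A}
    (h : (S.written s i)[t]? = some a) : (S.written s j)[t]? = some a := by
  induction j, hij using Nat.le_induction with
  | base => exact h
  | succ j _ ih => rwa [written, List.getElem?_append_left (List.getElem?_eq_some_iff.1 ih).1]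

theorem lt_length_written (hS : S.IsProductive) (s : ℕ → A) (i : ℕ) :
    i < (S.written s i).length := by
  induction i with
  | zero => simp [written]
  | succ i ih =>
    have := List.length_pos_iff.2 (hS.out_ne_nil (S.controlAt s i) (s i))
    rw [written, List.length_append]
    omega

theorem succ_lt_length_written (hS : S.IsProductive) (s : ℕ → A) (hi : i ≠ 0) :
    i + 1 < (S.written s i).length := by
  induction i, Nat.one_le_iff_ne_zero.2 hi using Nat.le_induction with
  | base =>
    have := hS.two_le_length_out_start (s 0)
    simp only [written, controlAt, List.length_append, List.length_singleton]
    omega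
  | succ i _ ih =>
    specialize ih (by omega)
    have := List.length_pos_iff.2 (hS.out_ne_nil (S.controlAt s i) (s i))
    rw [written, List.length_append]
    omega

theorem eq_of_getElem?_written (h : S.IsConsistent s) (i : ℕ) {t : ℕ} {a : A}
    (ha : (S.written s i)[t]? = some a) : s t = a := by
  induction i with
  | zero =>
    obtain ⟨ht, rfl⟩ := List.getElem?_eq_some_iff.1 ha
    obtain rfl : t = 0 := by simpa [written] using ht
    rfl
  | succ i ih =>
    rw [written, List.getElem?_append] at ha
    split_ifs at ha with ht
    · exact ih ha
    · simpa only [Nat.add_sub_cancel' (not_lt.1 ht)] using h i _ a ha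

theorem isConsistent_iff_written (hS : S.IsProductive) :
    S.IsConsistent s ↔ ∀ i, (S.written s i)[i]? = some (s i) := by
  constructor
  · intro h i
    have hi := List.getElem?_eq_getElem (lt_length_written hS s i)
    rw [hi, eq_of_getElem?_written h i hi]
  · intro h i t a ha
    set p := (S.written s i).length + t with hp
    have hpa : (S.written s (i + 1))[p]? = some a := by
      rwa [written, List.getElem?_append_right (by omega), hp, Nat.add_sub_cancel_left]
    exact Option.some_injective _ <|
      (getElem?_written_of_le (le_max_right (i + 1) p) (h p)).symm.trans
        (getElem?_written_of_le (le_max_left (i + 1) p) hpa)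

theorem iterate_step_eq (h : ∀ j < i, (S.written s j)[j]? = some (s j)) :
    S.step^[i] (S.start, [s 0]) = (S.controlAt s i, (S.written s i).drop i) := by
  induction i with
  | zero => rfl
  | succ i ih =>
    obtain ⟨hlt, hget⟩ := List.getElem?_eq_some_iff.1 (h i i.lt_succ_self)
    rw [Function.iterate_succ_apply', ih fun j hj => h j (by omega), List.drop_eq_getElem_cons hlt,
      hget, step, written, List.drop_append_of_le_length hlt, controlAt]

theorem popped_eq_written (h : ∀ j < i, (S.written s j)[j]? = some (s j)) :
    S.popped (S.start, [s 0]) i = (S.written s i)[i]? := by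
  rw [popped, iterate_step_eq h, List.head?_drop]

theorem isConsistent_iff_popped (hS : S.IsProductive) :
    S.IsConsistent s ↔ ∀ i, S.popped (S.start, [s 0]) i = some (s i) := by
  rw [isConsistent_iff_written hS]
  refine ⟨fun h i => (popped_eq_written fun j _ => h j).trans (h i), fun h i => ?_⟩
  induction i using Nat.strong_induction_on with
  | _ i ih => rw [← popped_eq_written ih, h]

open WeightedAutomaton

/-- The states of the weighted automaton attached to a queue system: `control q` simulates the
queue system, `await a` counts down to the position at which the letter `a` was announced, `drain`
lowers the weight to zero after a halting letter, and `sink` keeps the weight it has. -/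
inductive State (A Q : Type*)
  | control (q : Q)
  | await (a : A)
  | drain
  | sink

instance [Finite A] [Finite Q] : Finite (State A Q) :=
  .of_surjective (Sum.elim .control (Sum.elim .await fun b : Bool => cond b .drain .sink)) <| by
    rintro (q | a | _ | _)
    exacts [⟨.inl q, rfl⟩, ⟨.inr (.inl a), rfl⟩, ⟨.inr (.inr true), rfl⟩,
      ⟨.inr (.inr false), rfl⟩]

/-- The transitions that verify an announcement or react to a letter of `H`; they do not depend on
the moves of the queue system. -/
inductive Watch (H : Set A) : State A Q × A × State A Q × ℤ → Prop
  | halt (q : Q) {x : A} (hx : x ∈ H) : Watch H (.control q, x, .drain, 0)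
  | drain (x : A) : Watch H (.drain, x, .drain, -2)
  | count (a x : A) : Watch H (.await a, x, .await a, -2)
  | reject {a x : A} (hx : x ≠ a) : Watch H (.await a, x, .sink, -1)
  | sink (x : A) : Watch H (.sink, x, .sink, 0)

variable (S) in
/-- The transitions of the weighted automaton of the queue system `S` with halting letters `H`.
After `k` steps the simulation has weight `2 * (ℓ - k - 1)`, where `ℓ` is the length of
`S.written s k`. Announcing the letter at a later position `p` turns the weight into the odd number
`2 * (p - k) + 1`, with `k` the new number of steps, so that it can reach zero only through
`Watch.reject` when the letter at position `p` is read. -/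
inductive Transition (H : Set A) : State A Q × A × State A Q × ℤ → Prop
  | push (q : Q) (x : A) :
      Transition H (.control q, x, .control (S.next q x), ((2 * (S.out q x).tail.length : ℕ) : ℤ))
  | announce (q : Q) (x : A) {t : ℕ} {a : A} (ha : (S.out q x)[t]? = some a) :
      Transition H (.control q, x, .await a, ((2 * t + 1 : ℕ) : ℤ))
  | watch {t} (ht : Watch H t) : Transition H t

variable (S) in
/-- The weight of the simulation after `k` steps: twice the length of the queue without its first
letter. -/
def simulationWeight (s : ℕ → A) (k : ℕ) : ℤ :=
  2 * ((S.written s k).length - k - 1)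

theorem simulationWeight_succ (hS : S.IsProductive) (s : ℕ → A) (k : ℕ) :
    S.simulationWeight s (k + 1) = S.simulationWeight s k +
      ((2 * (S.out (S.controlAt s k) (s k)).tail.length : ℕ) : ℤ) := by
  have := List.length_pos_iff.2 (hS.out_ne_nil (S.controlAt s k) (s k))
  simp only [simulationWeight, written, List.length_append, List.length_tail]
  omega

variable {H : Set A}

theorem run_control (hS : S.IsProductive) (s : ℕ → A) (k : ℕ) :
    Run {t | S.Transition H t} (.control S.start) s k (.control (S.controlAt s k))
      (S.simulationWeight s k) := by
  induction k with
  | zero => exact .nil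
  | succ k ih => exact simulationWeight_succ hS s k ▸ ih.snoc (.push _ _)

theorem isConsistent_of_zeroFree (hS : S.IsProductive)
    (h : ZeroFree {t | S.Transition H t} (.control S.start) s) : S.IsConsistent s := by
  intro k t a ha
  by_contra hne
  obtain ⟨d, hd⟩ := Nat.exists_eq_add_of_lt (lt_length_written hS s k)
  have hannounced := (run_control hS s k).snoc (Transition.announce (H := H) _ _ ha)
  have hawaited := hannounced.iterate_loop (fun x => .watch (.count a x)) (d + t)
  rw [show k + 1 + (d + t) = (S.written s k).length + t by omega] at hawaited
  have hzero := hawaited.snoc (.watch (.reject hne))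
  have hweight :
      S.simulationWeight s k + ((2 * t + 1 : ℕ) : ℤ) + ((d + t : ℕ) : ℤ) * -2 + -1 = 0 := by
    rw [simulationWeight, hd]
    omega
  exact h _ _ (hweight ▸ hzero)

theorem not_mem_of_zeroFree (hS : S.IsProductive)
    (h : ZeroFree {t | S.Transition H t} (.control S.start) s) (k : ℕ) : s k ∉ H := by
  intro hk
  obtain ⟨d, hd⟩ := Nat.exists_eq_add_of_lt (lt_length_written hS s k)
  have hhalted := (run_control hS s k).snoc (.watch (.halt _ hk))
  have hdrained := hhalted.iterate_loop (fun x => .watch (.drain x)) d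
  rw [show k + 1 + d = (k + d) + 1 by omega] at hdrained
  have hweight : S.simulationWeight s k + 0 + (d : ℤ) * -2 = 0 := by
    rw [simulationWeight, hd]
    omega
  exact h _ _ (hweight ▸ hdrained)

variable (S) in
/-- What is known about the state and the weight after `k` steps of a run on a consistent word
without halting letters. -/
def Invariant (s : ℕ → A) (k : ℕ) : State A Q → ℤ → Prop
  | .control q, W => q = S.controlAt s k ∧ W = S.simulationWeight s k
  | .await a, W => ∃ p : ℕ, s p = a ∧ W = 2 * (p - k) + 1
  | .drain, _ => False
  | .sink, W => W ≠ 0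

theorem invariant_of_run (hS : S.IsProductive) (hs : S.IsConsistent s) (hH : ∀ i, s i ∉ H)
    {q : State A Q} (h : Run {t | S.Transition H t} (.control S.start) s k q W) :
    S.Invariant s k q W := by
  induction h with
  | nil => exact ⟨rfl, rfl⟩
  | @snoc k q W p z _ ht ih =>
    generalize hx : s k = x at ht
    obtain _ | ⟨_, _, ha⟩ | (⟨_, hmem⟩ | _ | _ | hne | _) := ht
    case push q =>
      obtain ⟨rfl, rfl⟩ := ih
      subst hx
      exact ⟨rfl, (simulationWeight_succ hS s k).symm⟩
    case announce =>
      obtain ⟨rfl, rfl⟩ := ih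
      subst hx
      refine ⟨_, hs k _ _ ha, ?_⟩
      rw [simulationWeight]
      push_cast
      ring
    case halt => exact absurd (hx ▸ hmem) (hH k)
    case drain => exact ih
    case count =>
      obtain ⟨p, hp, rfl⟩ := ih
      exact ⟨p, hp, by push_cast; ring⟩
    case reject =>
      obtain ⟨p, rfl, rfl⟩ := ih
      have : p ≠ k := by rintro rfl; exact hne hx.symm
      simp only [Invariant]; omega
    case sink => simpa only [Invariant, add_zero] using ih

theorem zeroFree_iff (hS : S.IsProductive) :
    ZeroFree {t | S.Transition H t} (.control S.start) s ↔
      S.IsConsistent s ∧ ∀ i, s i ∉ H := by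
  refine ⟨fun h => ⟨isConsistent_of_zeroFree hS h, not_mem_of_zeroFree hS h⟩, ?_⟩
  rintro ⟨hs, hH⟩ k (q | a | _ | _) hrun <;> have hinv := invariant_of_run hS hs hH hrun
  · have hlt := succ_lt_length_written hS s (Nat.add_one_ne_zero k)
    have hzero := hinv.2
    rw [simulationWeight] at hzero
    omega
  · obtain ⟨p, -, hp⟩ := hinv
    omega
  · exact hinv
  · exact hinv rfl

theorem exists_zeroFree_iff (hS : S.IsProductive) :
    (∃ s, ZeroFree {t | S.Transition H t} (.control S.start) s) ↔
      ∃ x, ∀ i, ∀ a ∈ S.popped (S.start, [x]) i, a ∉ H := by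
  simp only [zeroFree_iff hS, isConsistent_iff_popped hS]
  constructor
  · rintro ⟨s, hs, hH⟩
    refine ⟨s 0, fun i a ha => ?_⟩
    obtain rfl := Option.some_injective _ ((hs i).symm.trans ha)
    exact hH i
  · rintro ⟨x, hx⟩
    have hsome := popped_isSome hS (c := (S.start, [x])) (List.cons_ne_nil x [])
    choose s hs using fun i => Option.isSome_iff_exists.1 (hsome i)
    obtain rfl : x = s 0 := Option.some_injective _ (hs 0)
    exact ⟨s, hs, fun i => hx i _ (hs i)⟩

section TransitionList

variable [Finite A] [Finite Q]

theorem finite_watch (H : Set A) : {t : State A Q × A × State A Q × ℤ | Watch H t}.Finite := by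
  have hweights : ({-2, -1, 0} : Set ℤ).Finite := Set.toFinite _
  refine (Set.finite_univ.prod (Set.finite_univ.prod
    (Set.finite_univ.prod hweights))).subset fun t ht => ?_
  cases ht <;> simp

variable (S) in
/-- The push transition and the announcements of the state `control q` on the letter `x`. -/
def controlTransitions (q : Q) (x : A) : List (State A Q × A × State A Q × ℤ) :=
  (.control q, x, .control (S.next q x), ((2 * (S.out q x).tail.length : ℕ) : ℤ)) ::
    (List.range (S.out q x).length).map fun t =>
      (.control q, x, .await ((S.out q x)[t]?.getD x), ((2 * t + 1 : ℕ) : ℤ))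

variable (S) in
/-- An enumeration of `S.Transition H`. -/
noncomputable def transitions (H : Set A) : List (State A Q × A × State A Q × ℤ) :=
  (((Set.finite_univ (α := Q × A)).toFinset.toList).flatMap fun c =>
    S.controlTransitions c.1 c.2) ++ (finite_watch H).toFinset.toList

theorem mem_transitions {H : Set A} {t : State A Q × A × State A Q × ℤ} :
    t ∈ S.transitions H ↔ S.Transition H t := by
  simp only [transitions, controlTransitions, List.mem_append, List.mem_flatMap, List.mem_cons,
    List.mem_map, List.mem_range, Finset.mem_toList, Set.Finite.mem_toFinset, Set.mem_univ,
    true_and, Set.mem_ofPred_eq]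
  constructor
  · rintro (⟨⟨q, x⟩, rfl | ⟨t, ht, rfl⟩⟩ | ht)
    · exact .push q x
    · exact .announce q x (by rw [List.getElem?_eq_getElem ht, Option.getD_some])
    · exact .watch ht
  · rintro (⟨q, x⟩ | @⟨q, x, t, a, ha⟩ | ht)
    · exact .inl ⟨(q, x), .inl rfl⟩
    · exact .inl ⟨(q, x), .inr ⟨t, (List.getElem?_eq_some_iff.1 ha).1,
        by rw [ha, Option.getD_some]⟩⟩
    · exact .inr ht

theorem transitions_complete (H : Set A) (q : State A Q) (x : A) :
    ∃ p z, (q, x, p, z) ∈ S.transitions H := by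
  simp only [mem_transitions]
  rcases q with q | a | _ | _
  exacts [⟨_, _, .push q x⟩, ⟨_, _, .watch (.count a x)⟩, ⟨_, _, .watch (.drain x)⟩,
    ⟨_, _, .watch (.sink x)⟩]

theorem primrec_intCast : Primrec (fun n : ℕ => (n : ℤ)) :=
  Primrec.encode_iff.1 (Primrec.nat_double.of_eq fun _ => rfl)

theorem primrec_transitions {σ : Type*} [Primcodable σ] [Primcodable A] [Primcodable Q]
    [Primcodable (State A Q)] {S : σ → QueueSystem A Q}
    (hnext : Primrec fun c : σ × Q × A => (S c.1).next c.2.1 c.2.2)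
    (hout : Primrec fun c : σ × Q × A => (S c.1).out c.2.1 c.2.2) (H : Set A) :
    Primrec fun u => (S u).transitions H := by
  have hcontrol : Primrec (State.control : Q → State A Q) := .dom_finite _
  have hawait : Primrec (State.await : A → State A Q) := .dom_finite _
  have hq : Primrec fun c : σ × Q × A => (State.control c.2.1 : State A Q) :=
    hcontrol.comp (.comp .fst .snd)
  have hx : Primrec fun c : σ × Q × A => c.2.2 := .comp .snd .snd
  have hpush : Primrec fun c : σ × Q × A => ((2 * ((S c.1).out c.2.1 c.2.2).tail.length : ℕ) : ℤ) :=
    primrec_intCast.comp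
      (Primrec.nat_double.comp (.comp .list_length (Primrec.list_tail.comp hout)))
  have hannounce : Primrec fun c : (σ × Q × A) × ℕ => ((2 * c.2 + 1 : ℕ) : ℤ) :=
    primrec_intCast.comp (Primrec.nat_double_succ.comp .snd)
  have hletter : Primrec fun c : (σ × Q × A) × ℕ =>
      (State.await (((S c.1.1).out c.1.2.1 c.1.2.2)[c.2]?.getD c.1.2.2) : State A Q) :=
    hawait.comp (.comp .option_getD
      (.pair (Primrec.list_getElem?.comp (hout.comp .fst) .snd) (hx.comp .fst)))
  have hcontrolTransitions : Primrec fun c : σ × Q × A => (S c.1).controlTransitions c.2.1 c.2.2 :=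
    Primrec.list_cons.comp (.pair hq (.pair hx (.pair (hcontrol.comp hnext) hpush)))
      (.list_map (.comp .list_range (.comp .list_length hout))
        (Primrec.pair (hq.comp .fst) (.pair (hx.comp .fst) (.pair hletter hannounce))))
  exact Primrec.list_append.comp (.list_flatMap (.const _) hcontrolTransitions) (.const _)

end TransitionList

end QueueSystem

/-- An arbitrary coding of a finite type by natural numbers. -/
@[reducible]
noncomputable def primcodableOfFinite (α : Type*) [Finite α] : Primcodable α :=
  .ofEquiv _ (Finite.equivFin α)

namespace TapeQueue

open Turing QueueSystem WeightedAutomaton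

variable {Γ Λ : Type*} [Inhabited Γ] [Inhabited Λ] (M : TM0.Machine Γ Λ)

/-- A tape cell, marked with the machine state if the head is on it. -/
abbrev Cell (Γ Λ : Type*) : Type _ := Γ × Option Λ

/-- The state of a left-to-right sweep over a row of cells: the cell read last, which is not yet
written because the head may still enter it from the right, and the machine state if the head moves
right into the next cell. -/
abbrev SweepState (Γ Λ : Type*) : Type _ := Cell Γ Λ × Option Λ

/-- The row of cells with the symbols `l` in which no cell carries the head. -/
def unmarked (l : List Γ) : List (Cell Γ Λ) :=
  l.map (·, none)

/-- The state of a sweep before the first cell, with a blank cell added at the left end. -/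
def sweepStart : SweepState Γ Λ := ((default, none), none)

/-- One step of a sweep that performs a move of `M`: the cell to be written and the new state. -/
def sweepStep : SweepState Γ Λ → Cell Γ Λ → Cell Γ Λ × SweepState Γ Λ
  | (c, s), (a, none) => (c, ((a, s), none))
  | (c, _), (a, some q) =>
    match M q a with
    | none => (c, ((a, none), none))
    | some (q', .write b) => (c, ((b, some q'), none))
    | some (q', .move .left) => ((c.1, some q'), ((a, none), none))
    | some (q', .move .right) => (c, ((a, none), some q'))

/-- The row written by a sweep; it extends the tape by a blank cell at each end. -/
def sweep : SweepState Γ Λ → List (Cell Γ Λ) → List (Cell Γ Λ)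
  | (c, s), [] => [c, (default, s)]
  | st, x :: r => (sweepStep M st x).1 :: sweep (sweepStep M st x).2 r

/-- The row of cells `r` is a finite window of the tape of `c` that contains the head and all cells
that are not blank. -/
def Represents (r : List (Cell Γ Λ)) (c : TM0.Cfg Γ Λ) : Prop :=
  ∃ L R, r = unmarked L.reverse ++ (c.Tape.head, some c.q) :: unmarked R ∧
    ListBlank.mk L = c.Tape.left ∧ ListBlank.mk R = c.Tape.right

/-- The head scans a symbol on which the machine stops. -/
def IsHalting (x : Cell Γ Λ) : Prop :=
  ∃ q ∈ x.2, M q x.1 = none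

variable {M}

theorem mk_append_default (l : List Γ) : ListBlank.mk (l ++ [default]) = ListBlank.mk l :=
  Quotient.sound (.inr ⟨1, rfl⟩)

theorem exists_append_default_eq_cons (l : List Γ) :
    ∃ a l', l ++ [default] = a :: l' ∧ (ListBlank.mk l).head = a ∧
      (ListBlank.mk l).tail = ListBlank.mk l' := by
  obtain ⟨a, l', h⟩ := List.exists_cons_of_ne_nil (l := l ++ [default]) (by simp)
  exact ⟨a, l', h, by rw [← mk_append_default, h, ListBlank.head_mk, List.headI_cons],
    by rw [← mk_append_default, h, ListBlank.tail_mk, List.tail_cons]⟩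

theorem sweep_unmarked_append {a b : Γ} {l l' : List Γ} (h : a :: l = l' ++ [b])
    (r : List (Cell Γ Λ)) :
    sweep M ((a, none), none) (unmarked l ++ r) = unmarked l' ++ sweep M ((b, none), none) r := by
  induction l' generalizing a l with
  | nil =>
    obtain ⟨rfl, rfl⟩ := List.cons_eq_cons.1 h
    rfl
  | cons x l' ih =>
    rw [List.cons_append] at h
    obtain ⟨rfl, rfl⟩ := List.cons_eq_cons.1 h
    obtain ⟨y, l, hl⟩ := List.exists_cons_of_ne_nil (l := l' ++ [b]) (by simp)
    rw [hl]
    exact congrArg ((a, none) :: ·) (ih hl.symm)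

theorem sweep_unmarked {a : Γ} {l l' : List Γ} (h : l ++ [default] = a :: l') (c : Cell Γ Λ)
    (s : Option Λ) : sweep M (c, s) (unmarked l) = c :: (a, s) :: unmarked l' := by
  induction l generalizing a l' c s with
  | nil =>
    obtain ⟨rfl, rfl⟩ := List.cons_eq_cons.1 h
    rfl
  | cons x l ih =>
    rw [List.cons_append] at h
    obtain ⟨rfl, rfl⟩ := List.cons_eq_cons.1 h
    obtain ⟨y, l', hl⟩ := List.exists_cons_of_ne_nil (l := l ++ [default]) (by simp)
    rw [hl]
    exact congrArg (c :: ·) (ih hl (x, s) none)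

theorem Represents.sweep {r : List (Cell Γ Λ)} {c c' : TM0.Cfg Γ Λ} (hr : Represents r c)
    (hstep : c' ∈ TM0.step M c) : Represents (sweep M sweepStart r) c' := by
  obtain ⟨q, a, left, right⟩ := c
  obtain ⟨L, R, rfl, rfl, rfl⟩ := hr
  obtain ⟨⟨q', stmt⟩, hM, rfl⟩ := Option.map_eq_some_iff.1 hstep
  obtain ⟨b, L', hL, hbhead, hbtail⟩ := exists_append_default_eq_cons L
  obtain ⟨d, R', hR, hdhead, hdtail⟩ := exists_append_default_eq_cons R
  have hL' : default :: L.reverse = L'.reverse ++ [b] := by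
    simpa using congrArg List.reverse hL
  rw [sweepStart, sweep_unmarked_append hL', TapeQueue.sweep]
  match stmt with
  | .write e =>
    simp only [sweepStep, hM, sweep_unmarked hR]
    refine ⟨L ++ [default], R ++ [default], ?_, mk_append_default L, mk_append_default R⟩
    rw [hL, hR]
    simp [unmarked, Tape.write]
  | .move .left =>
    simp only [sweepStep, hM, sweep_unmarked hR]
    refine ⟨L', a :: (R ++ [default]), ?_, hbtail.symm, ?_⟩
    · rw [hR]
      simp [unmarked, Tape.move, hbhead]
    · rw [← ListBlank.cons_mk, mk_append_default]
      rfl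
  | .move .right =>
    simp only [sweepStep, hM, sweep_unmarked hR]
    refine ⟨a :: L ++ [default], R', ?_, ?_, hdtail.symm⟩
    · rw [List.cons_append, hL]
      simp [unmarked, Tape.move, hdhead]
    · rw [mk_append_default, ← ListBlank.cons_mk]
      rfl

theorem Represents.step_eq_none_iff {r : List (Cell Γ Λ)} {c : TM0.Cfg Γ Λ} (hr : Represents r c) :
    TM0.step M c = none ↔ ∃ x ∈ r, IsHalting M x := by
  obtain ⟨L, R, rfl, -, -⟩ := hr
  simp [IsHalting, unmarked, TM0.step]

/-- A row followed by an end mark, as it stands on the queue; the letters of the queue are the cells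
and the mark `none`. -/
def endMarked (r : List (Cell Γ Λ)) : List (Option (Cell Γ Λ)) :=
  r.map some ++ [none]

variable (M) in
/-- The queue system that writes the row `r` and then performs one sweep after another. Its control
states are the sweep states and the initial state `none`. -/
def queueSystem (r : List (Cell Γ Λ)) :
    QueueSystem (Option (Cell Γ Λ)) (Option (SweepState Γ Λ)) where
  start := none
  next
    | some st, some x => some (sweepStep M st x).2
    | _, _ => some sweepStart
  out
    | none, _ => endMarked r
    | some st, none => endMarked (sweep M st [])
    | some st, some x => [some (sweepStep M st x).1]

theorem isProductive_queueSystem {r : List (Cell Γ Λ)} (hr : r ≠ []) :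
    (queueSystem M r).IsProductive where
  out_ne_nil
    | none, _ => by simp [queueSystem, endMarked]
    | some _, none => by simp [queueSystem, endMarked]
    | some _, some _ => by simp [queueSystem]
  two_le_length_out_start _ := by
    have := List.length_pos_iff.2 hr
    simp only [queueSystem, endMarked, List.length_append, List.length_map, List.length_singleton]
    omega

variable (r₀ : List (Cell Γ Λ))

theorem iterate_step_sweep (r : List (Cell Γ Λ)) (st : SweepState Γ Λ)
    (v : List (Option (Cell Γ Λ))) :
    (queueSystem M r₀).step^[r.length + 1] (some st, endMarked r ++ v) =
      (some sweepStart, v ++ endMarked (sweep M st r)) := by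
  induction r generalizing st v with
  | nil => rfl
  | cons x r ih =>
    rw [List.length_cons, Function.iterate_succ_apply]
    refine Eq.trans ?_ ((ih (sweepStep M st x).2 (v ++ [some (sweepStep M st x).1])).trans ?_)
    · simp [endMarked, queueSystem, step]
    · simp [endMarked, sweep]

theorem popped_sweep (r : List (Cell Γ Λ)) (i : ℕ) :
    (queueSystem M r₀).popped (some sweepStart, endMarked r) (i + (r.length + 1)) =
      (queueSystem M r₀).popped (some sweepStart, endMarked (sweep M sweepStart r)) i := by
  simpa only [popped_add, List.append_nil, List.nil_append] using
    congrArg (popped _ · i) (iterate_step_sweep r₀ r sweepStart [])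

/-- The letters on which the weighted automaton of a tape queue starts to drain. -/
def haltingLetters (M : TM0.Machine Γ Λ) : Set (Option (Cell Γ Λ)) :=
  some '' {x | IsHalting M x}

theorem dom_eval_of_popped_mem {r : List (Cell Γ Λ)} {c : TM0.Cfg Γ Λ} (hr : Represents r c)
    {i : ℕ} {x : Option (Cell Γ Λ)}
    (hx : (queueSystem M r₀).popped (some sweepStart, endMarked r) i = some x)
    (hhalt : x ∈ haltingLetters M) : (StateTransition.eval (TM0.step M) c).Dom := by
  induction i using Nat.strong_induction_on generalizing r c with
  | _ i ih =>
    cases hc : TM0.step M c with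
    | none => exact Part.dom_iff_mem.2 ⟨c, StateTransition.mem_eval.2 ⟨.refl, hc⟩⟩
    | some c' =>
      have hi : r.length < i := by
        by_contra! hle
        rw [popped_eq_getElem? (by simp [endMarked]; omega)] at hx
        obtain ⟨y, hy, rfl⟩ := hhalt
        have hmem : y ∈ r := by simpa [endMarked] using List.mem_of_getElem? hx
        simpa [hc] using hr.step_eq_none_iff.2 ⟨y, hmem, hy⟩
      obtain ⟨j, rfl⟩ := Nat.exists_eq_add_of_lt hi
      rw [show r.length + j + 1 = j + (r.length + 1) by omega, popped_sweep] at hx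
      rw [StateTransition.reaches_eval (.single hc)]
      exact ih j (by omega) (hr.sweep hc) hx

theorem exists_popped_mem_of_dom_eval {r : List (Cell Γ Λ)} {c : TM0.Cfg Γ Λ}
    (hr : Represents r c) (hc : (StateTransition.eval (TM0.step M) c).Dom) :
    ∃ i, ∃ x ∈ (queueSystem M r₀).popped (some sweepStart, endMarked r) i,
      x ∈ haltingLetters M := by
  obtain ⟨d, hd⟩ := Part.dom_iff_mem.1 hc
  obtain ⟨hreach, hnone⟩ := StateTransition.mem_eval.1 hd
  clear hc hd
  induction hreach using Relation.ReflTransGen.head_induction_on generalizing r with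
  | refl =>
    obtain ⟨y, hmem, hy⟩ := hr.step_eq_none_iff.1 hnone
    obtain ⟨i, hi, rfl⟩ := List.mem_iff_getElem.1 hmem
    refine ⟨i, some r[i], ?_, ⟨_, hy, rfl⟩⟩
    rw [popped_eq_getElem? (by simp [endMarked]; omega)]
    simp [endMarked, List.getElem?_append, hi]
  | head hstep _ ih =>
    obtain ⟨i, hi⟩ := ih (hr.sweep hstep)
    exact ⟨i + (r.length + 1), by rwa [popped_sweep]⟩

theorem exists_zeroFree_queueSystem_iff {r : List (Cell Γ Λ)} {c : TM0.Cfg Γ Λ}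
    (hr : Represents r c) :
    (∃ s, ZeroFree {t | (queueSystem M r).Transition (haltingLetters M) t} (.control none) s) ↔
      ¬ (StateTransition.eval (TM0.step M) c).Dom := by
  have hne : r ≠ [] := by
    obtain ⟨L, R, rfl, -⟩ := hr
    simp
  refine (exists_zeroFree_iff (isProductive_queueSystem hne)).trans ⟨?_, fun hc => ⟨none, ?_⟩⟩
  · rintro ⟨_, hx⟩ hc
    obtain ⟨i, y, hy, hhalt⟩ := exists_popped_mem_of_dom_eval r hr hc
    exact hx (i + 1) y hy hhalt
  · rintro (_ | i) x hx hhalt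
    · obtain rfl : none = x := Option.some_injective _ hx
      simp [haltingLetters] at hhalt
    · exact hc (dom_eval_of_popped_mem r hr hx hhalt)

/-- The row of the initial configuration on the input `l`. -/
def initialRow (Λ : Type*) [Inhabited Λ] (l : List Γ) : List (Cell Γ Λ) :=
  (l.headI, some default) :: unmarked l.tail

theorem represents_initialRow (l : List Γ) :
    Represents (initialRow Λ l) (TM0.init l : TM0.Cfg Γ Λ) :=
  ⟨[], l.tail, rfl, rfl, rfl⟩

section Primrec

variable [Finite Γ] [Primcodable (Cell Γ Λ)]

theorem primrec_initialRow [Primcodable Γ] : Primrec (initialRow Λ : List Γ → List (Cell Γ Λ)) := by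
  have hhead : Primrec fun a : Γ => ((a, some default) : Cell Γ Λ) := .dom_finite _
  have hcell : Primrec fun a : Γ => ((a, none) : Cell Γ Λ) := .dom_finite _
  exact Primrec.list_cons.comp (hhead.comp .list_headI) (.list_map .list_tail (hcell.comp .snd))

variable [Finite Λ] [Primcodable (SweepState Γ Λ)]

theorem primrec_queueSystem_next : Primrec fun c : List (Cell Γ Λ) × Option (SweepState Γ Λ) ×
    Option (Cell Γ Λ) => (queueSystem M c.1).next c.2.1 c.2.2 := by
  have hnext : Primrec fun c : Option (SweepState Γ Λ) × Option (Cell Γ Λ) =>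
      (queueSystem M []).next c.1 c.2 := .dom_finite _
  exact hnext.comp .snd

theorem primrec_queueSystem_out : Primrec fun c : List (Cell Γ Λ) × Option (SweepState Γ Λ) ×
    Option (Cell Γ Λ) => (queueSystem M c.1).out c.2.1 c.2.2 := by
  have hsweep : Primrec fun c : SweepState Γ Λ × Option (Cell Γ Λ) =>
      (queueSystem M []).out (some c.1) c.2 := .dom_finite _
  have hrow : Primrec (endMarked : List (Cell Γ Λ) → _) :=
    Primrec.list_append.comp (.list_map .id (Primrec.option_some.comp .snd)) (.const _)
  refine (Primrec.option_casesOn (.comp .fst .snd) (hrow.comp .fst)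
    (hsweep.comp (.pair .snd (.comp .snd (.comp .snd .fst)))).to₂).of_eq ?_
  rintro ⟨r, _ | st, _ | x⟩ <;> rfl

end Primrec

variable [Finite Γ] [Finite Λ]

variable (M) in
/-- A code for the weighted automaton of the tape queue of `M` with initial row `r`. -/
noncomputable def automaton (r : List (Cell Γ Λ)) : WACode :=
  code ((queueSystem M r).transitions (haltingLetters M)) (.control none)

theorem wellFormed_and_hasAlwaysNonzeroWord_automaton_iff {r : List (Cell Γ Λ)} {c : TM0.Cfg Γ Λ}
    (hr : Represents r c) :
    WAWellFormed (automaton M r) ∧ WAHasAlwaysNonzeroWord (automaton M r) ↔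
      ¬ (StateTransition.eval (TM0.step M) c).Dom := by
  have hcomplete := (queueSystem M r).transitions_complete (haltingLetters M)
  refine (and_iff_right (wellFormed_code hcomplete _)).trans
    ((hasAlwaysNonzeroWord_code_iff hcomplete _).trans ?_)
  simp only [mem_transitions]
  exact exists_zeroFree_queueSystem_iff hr

theorem primrec_automaton [Primcodable (Cell Γ Λ)] :
    Primrec (automaton M : List (Cell Γ Λ) → WACode) := by
  let := primcodableOfFinite (SweepState Γ Λ)
  let := primcodableOfFinite (State (Option (Cell Γ Λ)) (Option (SweepState Γ Λ)))
  exact (primrec_code _).comp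
    (primrec_transitions primrec_queueSystem_next primrec_queueSystem_out _)

end TapeQueue

namespace HaltingProblem

open Turing PartrecToTM2

theorem exists_code_not_computablePred_dom :
    ∃ c : ToPartrec.Code, ¬ ComputablePred fun n : ℕ => (c.eval [n]).Dom := by
  have huniversal : Partrec fun n : ℕ => (Denumerable.ofNat Nat.Partrec.Code n).eval 0 :=
    Nat.Partrec.Code.eval_part.comp (Computable.ofNat _) (Computable.const 0)
  obtain ⟨c, hc⟩ := ToPartrec.Code.exists_code (Nat.Partrec'.part_iff₁.2 huniversal)
  refine ⟨c, fun h => ComputablePred.halting_problem 0 (h.computable_of_manyOneReducible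
    ⟨Encodable.encode, Computable.encode, fun d => ?_⟩)⟩
  have heval := hc ⟨[Encodable.encode d], rfl⟩
  simp only [List.Vector.head, Denumerable.ofNat_encode] at heval
  rw [heval]
  rfl

theorem exists_tm0_finite_of_supports {Γ Λ : Type} [Inhabited Γ] [Inhabited Λ]
    (M : TM0.Machine Γ Λ) {S : Finset Λ} (hS : TM0.Supports M S) :
    ∃ (Λ' : Type) (_ : Inhabited Λ') (_ : Finite Λ') (N : TM0.Machine Γ Λ'), ∀ l : List Γ,
      (StateTransition.eval (TM0.step N) (TM0.init l)).Dom ↔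
        (StateTransition.eval (TM0.step M) (TM0.init l)).Dom := by
  classical
  let : Inhabited S := ⟨⟨default, hS.1⟩⟩
  let restrict : PointedMap Λ S :=
    ⟨fun q => if h : q ∈ S then ⟨q, h⟩ else default, dif_pos hS.1⟩
  have hrestrict : ∀ q ∈ S, (restrict q : Λ) = q := fun q hq =>
    congrArg Subtype.val (dif_pos hq)
  let symbols : PointedMap Γ Γ := ⟨id, rfl⟩
  refine ⟨S, inferInstance, inferInstance, M.map symbols symbols restrict Subtype.val,
    fun l => StateTransition.tr_eval_dom (TM0.Machine.map_respects M symbols symbols restrict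
      Subtype.val hS (fun _ => rfl) hrestrict) ⟨hS.1, ?_⟩⟩
  rw [TM0.map_init symbols restrict l]
  exact congrArg TM0.init (List.map_id l)

theorem exists_tm0_finite_of_tm2 {K : Type} [DecidableEq K] {Γ : K → Type} {Λ σ : Type}
    [Inhabited Λ] [Inhabited σ] [Finite σ] (M : Λ → TM2.Stmt Γ Λ σ) {S : Finset Λ}
    (hS : TM2.Supports M S) (k : K) :
    ∃ (Λ' : Type) (_ : Inhabited Λ') (_ : Finite Λ') (N : TM0.Machine (TM2to1.Γ' K Γ) Λ'),
      ∀ l : List (Γ k), (StateTransition.eval (TM0.step N) (TM0.init (TM2to1.trInit k l))).Dom ↔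
        (StateTransition.eval (TM2.step M) (TM2.init k l)).Dom := by
  let := Fintype.ofFinite σ
  obtain ⟨Λ', hinh, hfin, N, hN⟩ := exists_tm0_finite_of_supports (TM1to0.tr (TM2to1.tr M))
    (TM1to0.tr_supports _ (TM2to1.tr_supports M hS))
  refine ⟨Λ', hinh, hfin, N, fun l => (hN _).trans ?_⟩
  have htm1 : (TM0.eval (TM1to0.tr (TM2to1.tr M)) (TM2to1.trInit k l)).Dom ↔
      (TM2.eval M k l).Dom := by
    rw [TM1to0.tr_eval, TM2to1.tr_eval_dom]
  exact htm1

theorem exists_tm0_finite_of_code (c : ToPartrec.Code) :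
    ∃ (Λ : Type) (_ : Inhabited Λ) (_ : Finite Λ)
      (N : TM0.Machine (TM2to1.Γ' K' fun _ => Γ') Λ), ∀ v : List ℕ,
        (StateTransition.eval (TM0.step N) (TM0.init (TM2to1.trInit K'.main (trList v)))).Dom ↔
          (c.eval v).Dom := by
  let : Inhabited Λ' := ⟨trNormal c Cont'.halt⟩
  obtain ⟨Λ, hinh, hfin, N, hN⟩ :=
    exists_tm0_finite_of_tm2 tr (tr_supports c Cont'.halt) K'.main
  refine ⟨Λ, hinh, hfin, N, fun v => (hN _).trans ?_⟩
  have hinit : init c v = TM2.init K'.main (trList v) := by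
    refine congrArg (TM2.Cfg.mk _ _) (funext fun k => ?_)
    cases k <;> simp [Function.update, K'.elim]
  rw [← hinit, tr_eval]
  rfl

theorem trNat_bit {b : Bool} {n : ℕ} (h : Nat.bit b n ≠ 0) :
    trNat (Nat.bit b n) = cond b Γ'.bit1 Γ'.bit0 :: trNat n := by
  unfold trNat
  rw [← Num.ofNat'_eq, Num.ofNat'_bit, Num.ofNat'_eq]
  rcases hn : (n : Num) with _ | p
  · obtain rfl : n = 0 := by simpa using congrArg (fun m : Num => (m : ℕ)) hn
    cases b
    · simp at h
    · rfl
  · cases b <;> rfl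

theorem trNat_eq_cons {n : ℕ} (h : n ≠ 0) :
    trNat n = cond n.bodd Γ'.bit1 Γ'.bit0 :: trNat n.div2 := by
  rw [← Nat.bit_bodd_div2 n] at h
  exact (congrArg trNat (Nat.bit_bodd_div2 n)).symm.trans (trNat_bit h)

theorem primrec_trNat [Primcodable Γ'] : Primrec trNat := by
  let extend (l : List (List Γ')) : Option (List Γ') :=
    if l.length = 0 then some [] else
      l[l.length.div2]?.map (cond l.length.bodd Γ'.bit1 Γ'.bit0 :: ·)
  have hextend : Primrec extend :=
    .ite (Primrec.eq.comp .list_length (.const 0)) (.const _) <|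
      .option_map (Primrec.list_getElem?.comp .id (Primrec.nat_div2.comp .list_length)) <|
        Primrec.list_cons.comp (.cond (Primrec.nat_bodd.comp (Primrec.list_length.comp .fst))
          (.const _) (.const _)) .snd
  refine (Primrec.nat_strong_rec (fun _ : Unit => trNat) (hextend.comp .snd).to₂
    fun _ n => ?_).comp (.const ()) .id
  simp only [extend, List.length_map, List.length_range]
  split_ifs with h
  · simp [h]
  · have hlt : n.div2 < n := Nat.binaryRec_decreasing h
    rw [trNat_eq_cons h, List.getElem?_map, List.getElem?_range hlt]
    rfl

theorem primrec_trInit {K : Type} [DecidableEq K] {Γ : K → Type}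
    [Finite (TM2to1.Γ' K Γ)] [Primcodable (TM2to1.Γ' K Γ)] (k : K) [Finite (Γ k)]
    [Primcodable (Γ k)] : Primrec (TM2to1.trInit (Γ := Γ) k) := by
  let push (a : Γ k) : TM2to1.Γ' K Γ := (false, Function.update (fun _ => none) k (some a))
  let markBottom (a : TM2to1.Γ' K Γ) : TM2to1.Γ' K Γ := (true, a.2)
  have hpush : Primrec push := .dom_finite _
  have hbottom : Primrec markBottom := .dom_finite _
  have hstack : Primrec fun l : List (Γ k) => l.reverse.map push :=
    .list_map .list_reverse (hpush.comp .snd)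
  exact Primrec.list_cons.comp (hbottom.comp (Primrec.list_headI.comp hstack))
    (Primrec.list_tail.comp hstack)

theorem exists_tm0_not_computablePred_dom :
    ∃ (Γ Λ : Type) (_ : Inhabited Γ) (_ : Inhabited Λ) (_ : Finite Γ) (_ : Finite Λ)
      (_ : Primcodable Γ) (M : TM0.Machine Γ Λ) (f : ℕ → List Γ), Primrec f ∧
      ¬ ComputablePred fun n => (StateTransition.eval (TM0.step M) (TM0.init (f n))).Dom := by
  obtain ⟨c, hc⟩ := exists_code_not_computablePred_dom
  obtain ⟨Λ, hinh, hfin, N, hN⟩ := exists_tm0_finite_of_code c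
  have : Finite K' := .of_surjective ![K'.main, .rev, .aux, .stack] fun k => by
    cases k
    exacts [⟨0, rfl⟩, ⟨1, rfl⟩, ⟨2, rfl⟩, ⟨3, rfl⟩]
  have : Finite (TM2to1.Γ' K' fun _ => Γ') := inferInstanceAs (Finite (Bool × (K' → Option Γ')))
  let := primcodableOfFinite (TM2to1.Γ' K' fun _ => Γ')
  let := primcodableOfFinite Γ'
  refine ⟨_, Λ, inferInstance, hinh, inferInstance, hfin, inferInstance, N,
    fun n => TM2to1.trInit K'.main (trList [n]),
    (primrec_trInit (Γ := fun _ => Γ') K'.main).comp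
      (Primrec.list_append.comp primrec_trNat (.const [Γ'.cons])), ?_⟩
  simpa only [hN] using hc

end HaltingProblem

/-- It is undecidable whether, for a given integer weighted automaton, there exists an
infinite word all of whose path prefixes have nonzero weight. -/
theorem nonuniversality_weighted_automata_undecidable :
    ¬ ComputablePred (fun c : WACode => WAWellFormed c ∧ WAHasAlwaysNonzeroWord c) := by
  intro hdec
  obtain ⟨Γ, Λ, _, _, _, _, _, M, f, hf, hM⟩ :=
    HaltingProblem.exists_tm0_not_computablePred_dom
  let := primcodableOfFinite (TapeQueue.Cell Γ Λ)
  have hreduction (n : ℕ) :=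
    TapeQueue.wellFormed_and_hasAlwaysNonzeroWord_automaton_iff (M := M)
      (TapeQueue.represents_initialRow (f n))
  have hcode := TapeQueue.primrec_automaton (M := M).comp (TapeQueue.primrec_initialRow.comp hf)
  exact hM ((hdec.computable_of_manyOneReducible
    ⟨_, hcode.to_comp, fun n => (hreduction n).symm⟩).not.of_eq fun n => not_not)
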